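/- Let d = 2^n, let x ∈ ℝ^d, let H be the normalized Walsh–Hadamard matrix and D a random sign diagonal matrix, and set u = H·D·x. Then for every coordinate i, E[u(i)⁶] ≤ 15‖x‖₂⁶/d³. -/

import Mathlib

open MeasureTheory ProbabilityTheory Real

/-- The Rademacher distribution on `ℝ`: `±1` each with probability `1/2`. -/
noncomputable def rademacher : Measure ℝ :=
  (2 : ENNReal)⁻¹ • Measure.dirac 1 + (2 : ENNReal)⁻¹ • Measure.dirac (-1)

/-- The normalized Walsh–Hadamard matrix of size `2^n`: entry `(i,j)` is
`(−1)^{⟨i,j⟩}/√(2^n)` where `⟨i,j⟩` is the inner product of the binary representations of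
the (0-indexed) `i` and `j`. -/
noncomputable def hadamardMatrix (n : ℕ) : Matrix (Fin (2 ^ n)) (Fin (2 ^ n)) ℝ :=
  Matrix.of fun i j =>
    (-1 : ℝ) ^ (∑ k : Fin n, ((i : ℕ).testBit k).toNat * ((j : ℕ).testBit k).toNat) /
      Real.sqrt (2 ^ n)

/-!
Call a random variable sub-Gaussian, at the level of moments, with variance proxy `c` if its odd
moments vanish and its `2k`-th moment is at most `(2k - 1)‼ * c ^ k`, the `2k`-th moment of a
centered Gaussian of variance `c`. Variance proxies of independent variables add up: expand
`(X + Y) ^ (2k)` and use `(2k choose 2i) * (2i - 1)‼ * (2j - 1)‼ = (k choose i) * (2k - 1)‼` for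
`i + j = k`. A random sign has proxy `1`, and each coordinate of `H D x` is a sum of independent
signs with weights `± x j / √d`, so it has proxy `‖x‖² / d`; the constant `15` is `5‼`.
-/

open Finset Matrix
open scoped Nat

theorem factorial_two_mul_eq_doubleFactorial_mul (n : ℕ) :
    (2 * n)! = (2 * n - 1)‼ * (2 ^ n * n !) := by
  cases n with
  | zero => rfl
  | succ n =>
    rw [← Nat.doubleFactorial_two_mul, mul_comm (_ - 1)‼]
    exact Nat.factorial_eq_mul_doubleFactorial (2 * n + 1)

theorem choose_two_mul_mul_doubleFactorial_mul_doubleFactorial (i j : ℕ) :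
    (2 * (i + j)).choose (2 * i) * (2 * i - 1)‼ * (2 * j - 1)‼ =
      (i + j).choose i * (2 * (i + j) - 1)‼ := by
  have h_pos : 0 < 2 ^ (i + j) * (i ! * j !) := by positivity
  refine Nat.eq_of_mul_eq_mul_right h_pos ?_
  calc (2 * (i + j)).choose (2 * i) * (2 * i - 1)‼ * (2 * j - 1)‼ * (2 ^ (i + j) * (i ! * j !))
      = (2 * i + 2 * j).choose (2 * i) * (2 * i)! * (2 * j)! := by
        rw [factorial_two_mul_eq_doubleFactorial_mul i, factorial_two_mul_eq_doubleFactorial_mul j,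
          mul_add]
        ring
    _ = (2 * (i + j) - 1)‼ * (2 ^ (i + j) * ((i + j).choose i * i ! * j !)) := by
        rw [Nat.choose_symm_add, Nat.add_choose_mul_factorial_mul_factorial, Nat.choose_symm_add,
          Nat.add_choose_mul_factorial_mul_factorial, ← factorial_two_mul_eq_doubleFactorial_mul,
          mul_add]
    _ = (i + j).choose i * (2 * (i + j) - 1)‼ * (2 ^ (i + j) * (i ! * j !)) := by ring

theorem sum_antidiagonal_two_mul_of_odd_eq_zero {M : Type*} [AddCommMonoid M] {f : ℕ × ℕ → M}
    (hf : ∀ p, Odd p.1 → f p = 0) (k : ℕ) :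
    ∑ p ∈ antidiagonal (2 * k), f p = ∑ p ∈ antidiagonal k, f (2 * p.1, 2 * p.2) := by
  refine (sum_of_injOn (fun p : ℕ × ℕ ↦ (2 * p.1, 2 * p.2)) ?_ ?_ ?_ fun _ _ ↦ rfl).symm
  · rintro ⟨a, b⟩ - ⟨a', b'⟩ - h
    simpa using h
  · rintro ⟨a, b⟩ h
    simp only [mem_coe, HasAntidiagonal.mem_antidiagonal] at h ⊢
    lia
  · rintro ⟨a, b⟩ h h_notMem
    refine hf _ (Nat.not_even_iff_odd.mp fun ⟨a', ha⟩ ↦ h_notMem ⟨(a', k - a'), ?_⟩)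
    simp only [mem_coe, HasAntidiagonal.mem_antidiagonal, Prod.mk.injEq] at h ⊢
    lia

section Moments

variable {Ω : Type*} {mΩ : MeasurableSpace Ω} {μ : Measure Ω} {X Y : Ω → ℝ} {c c' : ℝ}

theorem integrable_pow_of_memLp [IsFiniteMeasure μ] {n : ℕ} (hX : MemLp X n μ) :
    Integrable (X ^ n) μ :=
  (integrable_norm_iff (hX.aestronglyMeasurable.pow n)).mp <| by
    simpa only [Pi.pow_apply, norm_pow] using hX.integrable_norm_pow'

theorem moment_two_mul_nonneg (X : Ω → ℝ) (k : ℕ) (μ : Measure Ω) : 0 ≤ moment X (2 * k) μ :=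
  integral_nonneg fun ω ↦ (even_two_mul k).pow_nonneg (X ω)

theorem moment_add_of_indepFun [IsFiniteMeasure μ] (hXY : IndepFun X Y μ)
    (hX : ∀ n : ℕ, MemLp X n μ) (hY : ∀ n : ℕ, MemLp Y n μ) (n : ℕ) :
    moment (X + Y) n μ =
      ∑ p ∈ antidiagonal n, n.choose p.1 * (moment X p.1 μ * moment Y p.2 μ) := by
  have h_indep (i j : ℕ) : IndepFun (X ^ i) (Y ^ j) μ :=
    hXY.comp (measurable_id.pow_const i) (measurable_id.pow_const j)
  have h_int (i j : ℕ) : Integrable (X ^ i * Y ^ j) μ :=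
    (h_indep i j).integrable_mul (integrable_pow_of_memLp (hX i))
      (integrable_pow_of_memLp (hY j))
  calc moment (X + Y) n μ
      = ∫ ω, ∑ p ∈ antidiagonal n, n.choose p.1 * (X ^ p.1 * Y ^ p.2) ω ∂μ := by
        simp only [moment, (Commute.all X Y).add_pow', nsmul_eq_mul, Finset.sum_apply]
        rfl
    _ = ∑ p ∈ antidiagonal n, n.choose p.1 * ∫ ω, (X ^ p.1 * Y ^ p.2) ω ∂μ := by
        rw [integral_finsetSum _ fun p _ ↦ (h_int p.1 p.2).const_mul _]
        simp only [integral_const_mul]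
    _ = ∑ p ∈ antidiagonal n, n.choose p.1 * (moment X p.1 μ * moment Y p.2 μ) :=
        sum_congr rfl fun p _ ↦ by
          rw [(h_indep p.1 p.2).integral_mul_eq_mul_integral
            (integrable_pow_of_memLp (hX p.1)).aestronglyMeasurable
            (integrable_pow_of_memLp (hY p.2)).aestronglyMeasurable, moment, moment]

/-- A real random variable whose odd moments vanish and whose even moments are at most those of a
centered Gaussian of variance `c`. Bounding the moment generating function instead, as in
`HasSubgaussianMGF`, would lose the sharp constants. Truncated subtraction makes `(2 * k - 1)‼`
equal to `0‼ = 1` at `k = 0`, as it should be. -/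
structure HasSubgaussianMoments (X : Ω → ℝ) (c : ℝ) (μ : Measure Ω) : Prop where
  memLp (n : ℕ) : MemLp X n μ
  moment_odd {n : ℕ} (hn : Odd n) : moment X n μ = 0
  moment_even_le (k : ℕ) : moment X (2 * k) μ ≤ (2 * k - 1)‼ * c ^ k

namespace HasSubgaussianMoments

theorem varianceProxy_nonneg (hX : HasSubgaussianMoments X c μ) : 0 ≤ c := by
  simpa using (moment_two_mul_nonneg X 1 μ).trans (hX.moment_even_le 1)

theorem zero [IsZeroOrProbabilityMeasure μ] : HasSubgaussianMoments 0 0 μ where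
  memLp _ := MemLp.zero
  moment_odd hn := moment_zero hn.pos.ne'
  moment_even_le k := by
    rcases eq_or_ne k 0 with rfl | hk
    · simp [moment, measureReal_le_one]
    · simp [moment_zero, hk]

theorem const_mul (hX : HasSubgaussianMoments X c μ) (a : ℝ) :
    HasSubgaussianMoments (fun ω ↦ a * X ω) (a ^ 2 * c) μ := by
  have h_moment (n : ℕ) : moment (fun ω ↦ a * X ω) n μ = a ^ n * moment X n μ := by
    simp only [moment, Pi.pow_apply, mul_pow, integral_const_mul]
  refine ⟨fun n ↦ (hX.memLp n).const_mul a, fun hn ↦ ?_, fun k ↦ ?_⟩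
  · rw [h_moment, hX.moment_odd hn, mul_zero]
  · calc moment (fun ω ↦ a * X ω) (2 * k) μ
        ≤ a ^ (2 * k) * ((2 * k - 1)‼ * c ^ k) := by
          rw [h_moment]
          exact mul_le_mul_of_nonneg_left (hX.moment_even_le k) ((even_two_mul k).pow_nonneg a)
      _ = (2 * k - 1)‼ * (a ^ 2 * c) ^ k := by ring

theorem add_of_indepFun [IsFiniteMeasure μ] (hX : HasSubgaussianMoments X c μ)
    (hY : HasSubgaussianMoments Y c' μ) (hXY : IndepFun X Y μ) :
    HasSubgaussianMoments (X + Y) (c + c') μ := by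
  refine ⟨fun n ↦ (hX.memLp n).add (hY.memLp n), fun {n} hn ↦ ?_, fun k ↦ ?_⟩
  · rw [moment_add_of_indepFun hXY hX.memLp hY.memLp]
    refine sum_eq_zero fun p hp ↦ ?_
    have h_odd : Odd p.1 ∨ Odd p.2 := by
      rw [← HasAntidiagonal.mem_antidiagonal.mp hp] at hn
      grind
    rcases h_odd with h | h
    · rw [hX.moment_odd h, zero_mul, mul_zero]
    · rw [hY.moment_odd h, mul_zero, mul_zero]
  · rw [moment_add_of_indepFun hXY hX.memLp hY.memLp, sum_antidiagonal_two_mul_of_odd_eq_zero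
      fun p hp ↦ by rw [hX.moment_odd hp, zero_mul, mul_zero]]
    calc ∑ p ∈ antidiagonal k,
          ((2 * k).choose (2 * p.1) : ℝ) * (moment X (2 * p.1) μ * moment Y (2 * p.2) μ)
        ≤ ∑ p ∈ antidiagonal k, ((2 * k).choose (2 * p.1) : ℝ) *
            (((2 * p.1 - 1)‼ * c ^ p.1) * ((2 * p.2 - 1)‼ * c' ^ p.2)) := by
          have hc := hX.varianceProxy_nonneg
          gcongr with p
          · exact moment_two_mul_nonneg Y p.2 μ
          · exact hX.moment_even_le p.1
          · exact hY.moment_even_le p.2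
      _ = ∑ p ∈ antidiagonal k, (2 * k - 1)‼ * (k.choose p.1 * (c ^ p.1 * c' ^ p.2)) := by
          refine sum_congr rfl fun p hp ↦ ?_
          have h_coeff : ((2 * k).choose (2 * p.1) : ℝ) * (2 * p.1 - 1)‼ * (2 * p.2 - 1)‼ =
              k.choose p.1 * (2 * k - 1)‼ := by
            rw [← HasAntidiagonal.mem_antidiagonal.mp hp]
            exact_mod_cast choose_two_mul_mul_doubleFactorial_mul_doubleFactorial p.1 p.2
          linear_combination c ^ p.1 * c' ^ p.2 * h_coeff
      _ = (2 * k - 1)‼ * (c + c') ^ k := by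
          simp only [(Commute.all c c').add_pow', nsmul_eq_mul, mul_sum]

theorem sum_of_iIndepFun {ι : Type*} {X : ι → Ω → ℝ} {c : ι → ℝ}
    (hX : ∀ i, HasSubgaussianMoments (X i) (c i) μ) (h_indep : iIndepFun X μ) (s : Finset ι) :
    HasSubgaussianMoments (∑ i ∈ s, X i) (∑ i ∈ s, c i) μ := by
  classical
  have := h_indep.isProbabilityMeasure
  have h_meas (i : ι) : AEMeasurable (X i) μ := ((hX i).memLp 0).aestronglyMeasurable.aemeasurable
  induction s using Finset.induction_on with
  | empty => simpa only [sum_empty] using zero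
  | insert i s hi ih =>
    rw [sum_insert hi, sum_insert hi]
    exact (hX i).add_of_indepFun ih (h_indep.indepFun_finsetSum_of_notMem₀ h_meas hi).symm

theorem comp_measurePreserving {Ω' : Type*} {mΩ' : MeasurableSpace Ω'} {ν : Measure Ω'}
    {f : Ω' → Ω} (hX : HasSubgaussianMoments X c μ) (hf : MeasurePreserving f ν μ) :
    HasSubgaussianMoments (X ∘ f) c ν := by
  have h_moment (n : ℕ) : moment (X ∘ f) n ν = moment X n μ := by
    have h_meas : AEStronglyMeasurable (X ^ n) μ := (hX.memLp 0).aestronglyMeasurable.pow n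
    rw [← hf.map_eq] at h_meas
    rw [moment, moment, ← hf.map_eq, integral_map hf.aemeasurable h_meas]
    rfl
  refine ⟨fun n ↦ (hX.memLp n).comp_measurePreserving hf, fun hn ↦ ?_, fun k ↦ ?_⟩
  · rw [h_moment, hX.moment_odd hn]
  · rw [h_moment]
    exact hX.moment_even_le k

end HasSubgaussianMoments

end Moments

instance isProbabilityMeasure_rademacher : IsProbabilityMeasure rademacher :=
  ⟨by simp [rademacher, ENNReal.inv_two_add_inv_two]⟩

theorem ae_rademacher_iff {p : ℝ → Prop} : (∀ᵐ x ∂rademacher, p x) ↔ p 1 ∧ p (-1) := by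
  simp [rademacher, ae_dirac_eq]

theorem integral_rademacher (f : ℝ → ℝ) : ∫ x, f x ∂rademacher = (f 1 + f (-1)) / 2 := by
  have h_int (x : ℝ) : Integrable f ((2 : ENNReal)⁻¹ • Measure.dirac x) :=
    (integrable_dirac (by simp)).smul_measure (by simp)
  rw [rademacher, integral_add_measure (h_int 1) (h_int (-1)), integral_smul_measure,
    integral_smul_measure, integral_dirac, integral_dirac]
  simp only [ENNReal.toReal_inv, ENNReal.toReal_ofNat, smul_eq_mul]
  ring

theorem hasSubgaussianMoments_rademacher : HasSubgaussianMoments id 1 rademacher where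
  memLp _ := .of_bound aestronglyMeasurable_id 1 (ae_rademacher_iff.mpr (by simp))
  moment_odd hn := by simp [moment, integral_rademacher, hn.neg_one_pow]
  moment_even_le k := by
    have h_one_le : (1 : ℝ) ≤ (2 * k - 1)‼ := mod_cast Nat.doubleFactorial_pos _
    simpa [moment, integral_rademacher] using h_one_le

section SignedSums

variable {ι : Type*} [Fintype ι]

theorem hasSubgaussianMoments_sum_mul_pi_rademacher (a : ι → ℝ) :
    HasSubgaussianMoments (fun ε : ι → ℝ ↦ ∑ j, a j * ε j) (∑ j, a j ^ 2)
      (Measure.pi fun _ ↦ rademacher) := by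
  have h_sign (j : ι) : HasSubgaussianMoments (fun ε : ι → ℝ ↦ a j * ε j) (a j ^ 2)
      (Measure.pi fun _ ↦ rademacher) := by
    simpa using (hasSubgaussianMoments_rademacher.comp_measurePreserving
      (measurePreserving_eval (fun _ ↦ rademacher) j)).const_mul (a j)
  have h_indep : iIndepFun (fun j (ε : ι → ℝ) ↦ a j * ε j) (Measure.pi fun _ ↦ rademacher) :=
    iIndepFun_pi (X := fun j t ↦ a j * t) fun j ↦ by fun_prop
  simpa only [Finset.sum_fn] using
    HasSubgaussianMoments.sum_of_iIndepFun h_sign h_indep univ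

theorem mul_diagonal_mulVec_apply [DecidableEq ι] {m : Type*} (A : Matrix m ι ℝ) (ε x : ι → ℝ)
    (i : m) : ((A * diagonal ε) *ᵥ x) i = ∑ j, A i j * x j * ε j := by
  simp only [mulVec, dotProduct, mul_diagonal, mul_right_comm]

theorem stmt_13_general [DecidableEq ι] {m : Type*} {A : Matrix m ι ℝ} {i : m} {c : ℝ}
    (hA : ∀ j, A i j ^ 2 ≤ c) (x : EuclideanSpace ℝ ι) (k : ℕ) :
    ∫ ε : ι → ℝ, ((A * diagonal ε) *ᵥ x) i ^ (2 * k) ∂(Measure.pi fun _ ↦ rademacher) ≤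
      (2 * k - 1)‼ * (c * ‖x‖ ^ 2) ^ k := by
  have h_proxy : ∑ j, (A i j * x j) ^ 2 ≤ c * ‖x‖ ^ 2 := by
    simp only [mul_pow, EuclideanSpace.real_norm_sq_eq, mul_sum]
    gcongr with j
    exact hA j
  simp only [mul_diagonal_mulVec_apply]
  calc ∫ ε, (∑ j, A i j * x j * ε j) ^ (2 * k) ∂(Measure.pi fun _ ↦ rademacher)
      ≤ (2 * k - 1)‼ * (∑ j, (A i j * x j) ^ 2) ^ k :=
        (hasSubgaussianMoments_sum_mul_pi_rademacher fun j ↦ A i j * x j).moment_even_le k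
    _ ≤ (2 * k - 1)‼ * (c * ‖x‖ ^ 2) ^ k := by gcongr

end SignedSums

theorem hadamardMatrix_apply_sq (n : ℕ) (i j : Fin (2 ^ n)) :
    hadamardMatrix n i j ^ 2 = (2 ^ n : ℝ)⁻¹ := by
  rw [hadamardMatrix, of_apply, div_pow, Real.sq_sqrt (by positivity), pow_right_comm,
    neg_one_sq, one_pow, one_div]

/-- for `d = 2^n`, `x ∈ ℝ^d`, `H` the normalized Walsh–Hadamard matrix and
`D` a random sign diagonal matrix, `u = H·D·x` satisfies `E[u(i)⁶] ≤ 15‖x‖₂⁶/d³` for every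
coordinate `i`. -/
theorem stmt_13 (n : ℕ) (x : EuclideanSpace ℝ (Fin (2 ^ n))) (i : Fin (2 ^ n)) :
    (∫ ε, ((hadamardMatrix n * Matrix.diagonal ε).mulVec x i) ^ 6
        ∂(Measure.pi fun _ : Fin (2 ^ n) => rademacher))
      ≤ 15 * ‖x‖ ^ 6 / (2 ^ n : ℝ) ^ 3 := by
  have h_five : (5)‼ = 15 := rfl
  refine (stmt_13_general (fun j ↦ (hadamardMatrix_apply_sq n i j).le) x 3).trans_eq ?_
  norm_num [h_five]
  ring
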